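/- For every γ > 0, every λ₀ ∈ (0, π/(2γ)), and every positive integer k, the series below converges and one has 2·(−1)^k·k²·π²·γ·sin(λ₀γ)/(λ₀·(k²π² − γ²λ₀²)²) + ∑_{n=0}^∞ 64·(−1)^k·(1+2n)²·γ²·cos(λ₀γ)/(π⁴·((1+2n)² − 4k²)·((1+2n)² − (2λ₀γ/π)²)²) = C(λ₀)·2·(−1)^k·λ₀·γ·sin(λ₀γ)/(−k²π² + λ₀²γ²). -/

import Mathlib

open Real Set
open Filter Topology

/-!
Put `u = (1 + 2n)²`, `a = 2k` and `b = 2λ₀γ/π`. Up to a constant the summand is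
`u / ((u - a²)(u - b²)²)`, which partial fractions in `u` express through the terms of two
classical expansions: the Mittag-Leffler series `π tan (πz/2) = ∑ 4z / (u - z²)`, at `z = a` and
`z = b`, and its termwise derivative at `z = b`. At `z = a` the tangent vanishes, because
`πa/2 = kπ`. The tangent series is the cotangent series at `(z + 1)/2` with its poles regrouped
symmetrically about `0`.
-/

/-- The `n`-th term of the Mittag-Leffler expansion of `π * tan (π * z / 2)`: the contribution of
the pair of poles `z = ±(1 + 2 * n)`. -/
noncomputable def tanTerm (z : ℂ) (n : ℕ) : ℂ := 4 * z / ((1 + 2 * (n : ℂ)) ^ 2 - z ^ 2)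

theorem odd_add_ne_zero_of_cos_ne_zero {z : ℂ} (hz : Complex.cos (π * z / 2) ≠ 0) (m : ℤ) :
    1 + 2 * (m : ℂ) + z ≠ 0 := by
  intro h
  refine hz (Complex.cos_eq_zero_iff.2 ⟨-m - 1, ?_⟩)
  rw [show z = -(1 + 2 * (m : ℂ)) by linear_combination h]
  push_cast
  ring

theorem odd_sq_sub_sq_ne_zero_of_cos_ne_zero {z : ℂ} (hz : Complex.cos (π * z / 2) ≠ 0) (n : ℕ) :
    (1 + 2 * (n : ℂ)) ^ 2 - z ^ 2 ≠ 0 := by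
  have h_add : 1 + 2 * (n : ℂ) + z ≠ 0 := by
    exact_mod_cast odd_add_ne_zero_of_cos_ne_zero hz n
  have h_sub : 1 + 2 * (n : ℂ) - z ≠ 0 := fun h ↦
    odd_add_ne_zero_of_cos_ne_zero hz (-n - 1) (by push_cast; linear_combination -h)
  rw [sq_sub_sq]
  exact mul_ne_zero h_add h_sub

theorem isOpen_setOf_cos_pi_mul_div_two_ne_zero :
    IsOpen {z : ℂ | Complex.cos (π * z / 2) ≠ 0} :=
  isOpen_ne_fun (by fun_prop) continuous_const

theorem norm_tanTerm_le {z : ℂ} {n : ℕ} (hz : ‖z‖ ≤ n) :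
    ‖tanTerm z n‖ ≤ 4 * ‖z‖ * (1 / ((n : ℝ) + 1) ^ 2) := by
  have h_den : ((n : ℝ) + 1) ^ 2 ≤ ‖(1 + 2 * (n : ℂ)) ^ 2 - z ^ 2‖ := calc
    ((n : ℝ) + 1) ^ 2 ≤ (1 + 2 * (n : ℝ)) ^ 2 - ‖z‖ ^ 2 := by nlinarith [norm_nonneg z]
    _ = ‖(1 + 2 * (n : ℂ)) ^ 2‖ - ‖z ^ 2‖ := by
      rw [norm_pow, norm_pow, ← Complex.norm_of_nonneg (by positivity : (0 : ℝ) ≤ 1 + 2 * n)]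
      push_cast
      rfl
    _ ≤ ‖(1 + 2 * (n : ℂ)) ^ 2 - z ^ 2‖ := norm_sub_norm_le _ _
  rw [tanTerm, norm_div, norm_mul, Complex.norm_ofNat, mul_one_div]
  gcongr

theorem summableLocallyUniformlyOn_tanTerm {s : Set ℂ} (hs : IsOpen s) :
    SummableLocallyUniformlyOn (fun n z ↦ tanTerm z n) s := by
  refine SummableLocallyUniformlyOn.of_locally_bounded_eventually hs fun K _ hK ↦ ?_
  obtain ⟨R, hR⟩ := hK.isBounded.exists_norm_le
  refine ⟨fun n ↦ 4 * R * (1 / ((n : ℝ) + 1) ^ 2), Summable.mul_left _ ?_, ?_⟩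
  · exact_mod_cast (summable_nat_add_iff 1).2 (Real.summable_one_div_nat_pow.2 one_lt_two)
  · rw [Nat.cofinite_eq_atTop]
    filter_upwards [eventually_ge_atTop ⌈R⌉₊] with n hn z hz
    have hRn : R ≤ n := Nat.ceil_le.1 hn
    exact (norm_tanTerm_le ((hR z hz).trans hRn)).trans (by gcongr; exact hR z hz)

theorem add_one_div_two_mem_integerComplement {z : ℂ} (hz : Complex.cos (π * z / 2) ≠ 0) :
    (z + 1) / 2 ∈ Complex.integerComplement := by
  rintro ⟨m, hm⟩
  exact odd_add_ne_zero_of_cos_ne_zero hz (-m) (by push_cast; linear_combination -2 * hm)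

theorem cot_pi_mul_add_one_div_two (z : ℂ) :
    Complex.cot (π * ((z + 1) / 2)) = -Complex.tan (π * z / 2) := by
  rw [show (π : ℂ) * ((z + 1) / 2) = π * z / 2 + π / 2 by ring, Complex.cot,
    Complex.cos_add_pi_div_two, Complex.sin_add_pi_div_two, Complex.tan, neg_div]

theorem tanTerm_eq_sub_cotTerm {z : ℂ} (hz : Complex.cos (π * z / 2) ≠ 0) (n : ℕ) :
    tanTerm z n =
      (((z + 1) / 2 + ((n + 1 : ℕ) : ℂ))⁻¹ - ((z + 1) / 2 + (n : ℂ))⁻¹) -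
        cotTerm ((z + 1) / 2) n := by
  have hx := add_one_div_two_mem_integerComplement hz
  have h_left : (z + 1) / 2 - ((n : ℂ) + 1) ≠ 0 := by
    simpa [sub_eq_add_neg] using Complex.integerComplement_add_ne_zero hx (-(n + 1))
  have h_right : (z + 1) / 2 + (n : ℂ) ≠ 0 := Complex.integerComplement_add_ne_zero hx n
  have h_den : (1 + 2 * (n : ℂ)) ^ 2 - z ^ 2 =
      -4 * (((z + 1) / 2 + n) * ((z + 1) / 2 - (n + 1))) := by ring
  rw [tanTerm, cotTerm, h_den]
  push_cast
  generalize hx' : (z + 1) / 2 = x at *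
  obtain rfl : z = 2 * x - 1 := by linear_combination 2 * hx'
  field_simp
  ring

theorem hasSum_tanTerm {z : ℂ} (hz : Complex.cos (π * z / 2) ≠ 0) :
    HasSum (tanTerm z) (π * Complex.tan (π * z / 2)) := by
  set x := (z + 1) / 2 with hx
  have h_tele : Tendsto (fun N : ℕ ↦ (x + (N : ℂ))⁻¹) atTop (𝓝 0) :=
    tendsto_inv₀_cobounded.comp
      ((tendsto_const_add_cobounded x).comp tendsto_natCast_atTop_cobounded)
  have h_cot := tendsto_logDeriv_euler_cot_sub (add_one_div_two_mem_integerComplement hz)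
  have h_summable := (summableLocallyUniformlyOn_tanTerm isOpen_univ).summable (mem_univ z)
  have h_partial (N : ℕ) : ∑ n ∈ Finset.range N, tanTerm z n =
      (x + (N : ℂ))⁻¹ - x⁻¹ - ∑ n ∈ Finset.range N, cotTerm x n := by
    rw [Finset.sum_congr rfl fun n _ ↦ tanTerm_eq_sub_cotTerm hz n, Finset.sum_sub_distrib,
      Finset.sum_range_sub fun n : ℕ ↦ (x + (n : ℂ))⁻¹, Nat.cast_zero, add_zero]
  have h_value : π * Complex.tan (π * z / 2) = 0 - x⁻¹ - (π * Complex.cot (π * x) - 1 / x) := by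
    rw [hx, cot_pi_mul_add_one_div_two]
    ring
  rw [h_summable.hasSum_iff_tendsto_nat, h_value]
  simpa only [h_partial] using (h_tele.sub_const x⁻¹).sub h_cot

theorem hasSum_deriv_of_hasSumLocallyUniformlyOn {ι E : Type*} [NormedAddCommGroup E]
    [NormedSpace ℂ E] [CompleteSpace E] {f : ι → ℂ → E} {g : ℂ → E} {s : Set ℂ}
    (h : HasSumLocallyUniformlyOn f g s) (hf : ∀ i, DifferentiableOn ℂ (f i) s) (hs : IsOpen s)
    {z : ℂ} (hz : z ∈ s) : HasSum (fun i ↦ deriv (f i) z) (deriv g z) := by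
  have h_partial : ∀ t : Finset ι, DifferentiableOn ℂ (fun w ↦ ∑ i ∈ t, f i w) s :=
    fun t ↦ DifferentiableOn.fun_sum fun i _ ↦ hf i
  refine (((hasSumLocallyUniformlyOn_iff_tendstoLocallyUniformlyOn.1 h).deriv
    (.of_forall h_partial) hs).tendsto_at hz).congr fun t ↦ ?_
  exact deriv_fun_sum fun i _ ↦ (hf i).differentiableAt (hs.mem_nhds hz)

theorem hasDerivAt_tanTerm {z : ℂ} (hz : Complex.cos (π * z / 2) ≠ 0) (n : ℕ) :
    HasDerivAt (fun w ↦ tanTerm w n)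
      (4 * ((1 + 2 * (n : ℂ)) ^ 2 + z ^ 2) / ((1 + 2 * (n : ℂ)) ^ 2 - z ^ 2) ^ 2) z := by
  have h_num : HasDerivAt (fun w : ℂ ↦ 4 * w) 4 z := by
    simpa using (hasDerivAt_id z).const_mul 4
  have h_den := (hasDerivAt_pow 2 z).const_sub ((1 + 2 * (n : ℂ)) ^ 2)
  refine (h_num.div h_den (odd_sq_sub_sq_ne_zero_of_cos_ne_zero hz n)).congr_deriv ?_
  push_cast
  ring

theorem hasDerivAt_pi_mul_tan_pi_mul_div_two {z : ℂ} (hz : Complex.cos (π * z / 2) ≠ 0) :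
    HasDerivAt (fun w : ℂ ↦ π * Complex.tan (π * w / 2))
      (π ^ 2 / (2 * Complex.cos (π * z / 2) ^ 2)) z := by
  have h_inner : HasDerivAt (fun w : ℂ ↦ π * w / 2) (π / 2) z := by
    simpa using ((hasDerivAt_id z).const_mul (π : ℂ)).div_const 2
  refine (((Complex.hasDerivAt_tan hz).comp z h_inner).const_mul (π : ℂ)).congr_deriv ?_
  field

theorem hasSum_deriv_tanTerm {z : ℂ} (hz : Complex.cos (π * z / 2) ≠ 0) :
    HasSum (fun n : ℕ ↦
        4 * ((1 + 2 * (n : ℂ)) ^ 2 + z ^ 2) / ((1 + 2 * (n : ℂ)) ^ 2 - z ^ 2) ^ 2)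
      (π ^ 2 / (2 * Complex.cos (π * z / 2) ^ 2)) := by
  have h_open := isOpen_setOf_cos_pi_mul_div_two_ne_zero
  have h_deriv := hasSum_deriv_of_hasSumLocallyUniformlyOn
    (summableLocallyUniformlyOn_tanTerm h_open).hasSumLocallyUniformlyOn
    (fun n w hw ↦ (hasDerivAt_tanTerm hw n).differentiableAt.differentiableWithinAt) h_open hz
  have h_sum : (fun w ↦ ∑' n, tanTerm w n) =ᶠ[𝓝 z] fun w ↦ π * Complex.tan (π * w / 2) := by
    filter_upwards [h_open.mem_nhds hz] with w hw using (hasSum_tanTerm hw).tsum_eq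
  rw [h_sum.deriv_eq, (hasDerivAt_pi_mul_tan_pi_mul_div_two hz).deriv] at h_deriv
  simpa only [(hasDerivAt_tanTerm hz _).deriv] using h_deriv

theorem div_sub_sq_mul_sub_sq_sq_eq {K : Type*} [Field K] [NeZero (2 : K)] {a b u : K}
    (hb : b ≠ 0) (hab : a ^ 2 - b ^ 2 ≠ 0) (hua : u - a ^ 2 ≠ 0) (hub : u - b ^ 2 ≠ 0) :
    u / ((u - a ^ 2) * (u - b ^ 2) ^ 2) =
      a / (4 * (a ^ 2 - b ^ 2) ^ 2) * (4 * a / (u - a ^ 2)) -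
        a ^ 2 / (4 * b * (a ^ 2 - b ^ 2) ^ 2) * (4 * b / (u - b ^ 2)) -
        1 / (8 * (a ^ 2 - b ^ 2)) *
          (4 * (u + b ^ 2) / (u - b ^ 2) ^ 2 - 1 / b * (4 * b / (u - b ^ 2))) := by
  have h2 : (2 : K) ≠ 0 := two_ne_zero
  rw [show (8 : K) = 2 * 2 * 2 by norm_num, show (4 : K) = 2 * 2 by norm_num]
  field_simp
  ring

theorem hasSum_odd_sq_div_odd_sq_sub_sq_mul_odd_sq_sub_sq_sq {a b : ℂ}
    (ha : Complex.cos (π * a / 2) ≠ 0) (hb : Complex.cos (π * b / 2) ≠ 0) (hb₀ : b ≠ 0)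
    (hab : a ^ 2 - b ^ 2 ≠ 0) :
    HasSum (fun n : ℕ ↦ (1 + 2 * (n : ℂ)) ^ 2 /
        (((1 + 2 * (n : ℂ)) ^ 2 - a ^ 2) * ((1 + 2 * (n : ℂ)) ^ 2 - b ^ 2) ^ 2))
      (a / (4 * (a ^ 2 - b ^ 2) ^ 2) * (π * Complex.tan (π * a / 2)) -
        a ^ 2 / (4 * b * (a ^ 2 - b ^ 2) ^ 2) * (π * Complex.tan (π * b / 2)) -
        1 / (8 * (a ^ 2 - b ^ 2)) *
          (π ^ 2 / (2 * Complex.cos (π * b / 2) ^ 2) -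
            1 / b * (π * Complex.tan (π * b / 2)))) := by
  have h_sq := ((hasSum_deriv_tanTerm hb).sub ((hasSum_tanTerm hb).mul_left (1 / b))).mul_left
    (1 / (8 * (a ^ 2 - b ^ 2)))
  refine ((((hasSum_tanTerm ha).mul_left _).sub ((hasSum_tanTerm hb).mul_left _)).sub
    h_sq).congr_fun fun n ↦ ?_
  exact div_sub_sq_mul_sub_sq_sq_eq hb₀ hab (odd_sq_sub_sq_ne_zero_of_cos_ne_zero ha n)
    (odd_sq_sub_sq_ne_zero_of_cos_ne_zero hb n)

theorem nat_mul_pi_sq_sub_sq_ne_zero_of_sin_ne_zero {θ : ℂ} (hθ : Complex.sin θ ≠ 0) (k : ℕ) :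
    (k * π : ℂ) ^ 2 - θ ^ 2 ≠ 0 := by
  intro h
  refine hθ ?_
  rcases sq_eq_sq_iff_eq_or_eq_neg.1 (sub_eq_zero.1 h).symm with rfl | rfl
  · exact Complex.sin_nat_mul_pi k
  · rw [Complex.sin_neg, Complex.sin_nat_mul_pi, neg_zero]

theorem hasSum_odd_sq_div_odd_sq_sub_four_mul_sq_mul_odd_sq_sub_sq_sq {θ : ℂ}
    (hsin : Complex.sin θ ≠ 0) (hcos : Complex.cos θ ≠ 0) (k : ℕ) :
    HasSum (fun n : ℕ ↦ (1 + 2 * (n : ℂ)) ^ 2 /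
        (((1 + 2 * (n : ℂ)) ^ 2 - 4 * (k : ℂ) ^ 2) *
          ((1 + 2 * (n : ℂ)) ^ 2 - (2 * θ / π) ^ 2) ^ 2))
      (-(π ^ 4 / 64) *
        ((1 / Complex.cos θ ^ 2 - Complex.tan θ / θ) / ((k * π) ^ 2 - θ ^ 2) +
          2 * (k * π) ^ 2 * (Complex.tan θ / θ) / ((k * π) ^ 2 - θ ^ 2) ^ 2)) := by
  have hθ : θ ≠ 0 := by rintro rfl; exact hsin Complex.sin_zero
  have hD := nat_mul_pi_sq_sub_sq_ne_zero_of_sin_ne_zero hsin k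
  have h_angle_a : (π : ℂ) * (2 * k) / 2 = k * π := by ring
  have h_angle_b : (π : ℂ) * (2 * θ / π) / 2 = θ := by field
  have hab : (2 * k : ℂ) ^ 2 - (2 * θ / π) ^ 2 = 4 / π ^ 2 * ((k * π) ^ 2 - θ ^ 2) := by field
  have ha_tan : Complex.tan (k * π) = 0 := Complex.tan_nat_mul_pi k
  have ha_cos : Complex.cos (k * π) ≠ 0 := by
    intro h
    simpa [h, Complex.sin_nat_mul_pi] using Complex.sin_sq_add_cos_sq (k * π)
  have h := hasSum_odd_sq_div_odd_sq_sub_sq_mul_odd_sq_sub_sq_sq (a := 2 * k) (b := 2 * θ / π)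
    (by rwa [h_angle_a]) (by rwa [h_angle_b]) (by simp [hθ]) (by rw [hab]; simp [hD])
  rw [h_angle_a, h_angle_b, ha_tan, hab] at h
  convert h using 1
  · norm_num only [mul_pow]
  · generalize (k * π : ℂ) ^ 2 - θ ^ 2 = D at *
    field_simp
    ring

theorem stmt_10_general {γ l : ℂ} (hsin : Complex.sin (l * γ) ≠ 0)
    (hcos : Complex.cos (l * γ) ≠ 0) (k : ℕ) :
    HasSum
      (fun n : ℕ ↦
        64 * (-1 : ℂ) ^ k * (1 + 2 * (n : ℂ)) ^ 2 * γ ^ 2 * Complex.cos (l * γ) /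
          (π ^ 4 * ((1 + 2 * (n : ℂ)) ^ 2 - 4 * (k : ℂ) ^ 2) *
            ((1 + 2 * (n : ℂ)) ^ 2 - (2 * l * γ / π) ^ 2) ^ 2))
      (1 / 2 * (γ / (l * Complex.sin (l * γ) * Complex.cos (l * γ)) - 1 / l ^ 2) *
          (2 * (-1 : ℂ) ^ k * l * γ * Complex.sin (l * γ) /
            (-(k : ℂ) ^ 2 * π ^ 2 + l ^ 2 * γ ^ 2)) -
        2 * (-1 : ℂ) ^ k * (k : ℂ) ^ 2 * π ^ 2 * γ * Complex.sin (l * γ) /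
          (l * ((k : ℂ) ^ 2 * π ^ 2 - γ ^ 2 * l ^ 2) ^ 2)) := by
  obtain ⟨hl, hγ⟩ : l ≠ 0 ∧ γ ≠ 0 := by
    rw [← mul_ne_zero_iff]
    exact fun h ↦ hsin (by rw [h, Complex.sin_zero])
  have hD := nat_mul_pi_sq_sub_sq_ne_zero_of_sin_ne_zero hsin k
  convert! (hasSum_odd_sq_div_odd_sq_sub_four_mul_sq_mul_odd_sq_sub_sq_sq hsin hcos k).mul_left
    (64 * (-1 : ℂ) ^ k * γ ^ 2 * Complex.cos (l * γ) / π ^ 4) using 1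
  · ext n
    rw [div_mul_div_comm]
    ring_nf
  · rw [show -(k : ℂ) ^ 2 * π ^ 2 + l ^ 2 * γ ^ 2 = -((k * π) ^ 2 - (l * γ) ^ 2) by ring,
      show (k : ℂ) ^ 2 * π ^ 2 - γ ^ 2 * l ^ 2 = (k * π) ^ 2 - (l * γ) ^ 2 by ring, Complex.tan]
    generalize (k * π : ℂ) ^ 2 - (l * γ) ^ 2 = D at *
    generalize Complex.sin (l * γ) = s at *
    generalize Complex.cos (l * γ) = c at *
    field_simp
    ring

theorem mul_mem_Ioo_zero_pi_div_two {γ l : ℝ} (hγ : 0 < γ) (hl : l ∈ Ioo 0 (π / (2 * γ))) :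
    l * γ ∈ Ioo 0 (π / 2) := by
  refine ⟨mul_pos hl.1 hγ, ?_⟩
  rw [← lt_div_iff₀ hγ, div_div]
  exact hl.2

/-- For every `γ > 0`, `λ₀ ∈ (0, π/(2γ))` and positive integer `k`, with
`C(λ₀) = (1/2)·(γ/(λ₀·sin(λ₀γ)·cos(λ₀γ)) − 1/λ₀²)`, the series
`∑_{n=0}^∞ 64·(−1)^k·(1+2n)²·γ²·cos(λ₀γ)/(π⁴·((1+2n)² − 4k²)·((1+2n)² − (2λ₀γ/π)²)²)`
converges, and adding `2·(−1)^k·k²·π²·γ·sin(λ₀γ)/(λ₀·(k²π² − γ²λ₀²)²)` to its sum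
gives `C(λ₀)·2·(−1)^k·λ₀·γ·sin(λ₀γ)/(−k²π² + λ₀²γ²)`. -/
theorem stmt_10 (γ : ℝ) (hγ : 0 < γ) (l : ℝ) (hl : l ∈ Ioo 0 (π / (2 * γ)))
    (k : ℕ) (hk : 0 < k)
    (C : ℝ)
    (hC : C = (1/2) * (γ / (l * Real.sin (l * γ) * Real.cos (l * γ)) - 1 / l ^ 2)) :
    ∃ S : ℝ,
      HasSum
        (fun n : ℕ =>
          64 * (-1 : ℝ) ^ k * (1 + 2 * (n : ℝ)) ^ 2 * γ ^ 2 * Real.cos (l * γ) /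
            (π ^ 4 * ((1 + 2 * (n : ℝ)) ^ 2 - 4 * (k : ℝ) ^ 2) *
              ((1 + 2 * (n : ℝ)) ^ 2 - (2 * l * γ / π) ^ 2) ^ 2)) S ∧
      2 * (-1 : ℝ) ^ k * (k : ℝ) ^ 2 * π ^ 2 * γ * Real.sin (l * γ) /
          (l * ((k : ℝ) ^ 2 * π ^ 2 - γ ^ 2 * l ^ 2) ^ 2) + S =
        C * (2 * (-1 : ℝ) ^ k * l * γ * Real.sin (l * γ) /
          (-(k : ℝ) ^ 2 * π ^ 2 + l ^ 2 * γ ^ 2)) := by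
  obtain ⟨h_pos, h_lt⟩ := mul_mem_Ioo_zero_pi_div_two hγ hl
  have hsin : Real.sin (l * γ) ≠ 0 := (sin_pos_of_pos_of_lt_pi h_pos (by linarith)).ne'
  have hcos : Real.cos (l * γ) ≠ 0 := (cos_pos_of_mem_Ioo ⟨by linarith, h_lt⟩).ne'
  refine ⟨_, Complex.hasSum_ofReal.1 ?_, add_sub_cancel _ _⟩
  rw [hC]
  push_cast
  exact stmt_10_general (γ := γ) (l := l) (mod_cast hsin) (mod_cast hcos) k
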